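/- arXiv:2002.11445 — 7 statements merged into one kernel-verified Lean document; each statement's English description precedes it below -/
import Mathlib

section
/- Let R be a commutative ring and let G = (g_{ij}) be a symmetric matrix over R indexed by {0,1,…,N}. For every s ≥ 1 and every sequence of indices i_1,…,i_s ∈ {1,…,N}, the product ∏_{k=1}^{s} (g_{i_k i_{k+1}} − g_{0 i_k} g_{0 i_{k+1}}) (indices taken cyclically, so i_{s+1} = i_1) lies in the subring of R generated by the cyclic products of G. -/
/-- The set of cyclic products of a square matrix `A`: all products of the form
`a_{i₁ i₂} a_{i₂ i₃} ⋯ a_{iₛ i₁}` with `s ≥ 1`. -/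
def cycProd {R : Type*} [CommRing R] {I : Type*} (A : Matrix I I R) : Set R :=
  {x | ∃ (s : ℕ) (idx : ℕ → I), 1 ≤ s ∧
    x = ∏ k ∈ Finset.range s, A (idx k) (idx ((k + 1) % s))}

/-!
By symmetry `g_{0i} g_{0j} = g_{i0} g_{0j}`, so each factor `g_{ij} - g_{0i} g_{0j}` is a difference
of products of `G` along two walks from `i` to `j`, one direct and one through `0`. Walks
concatenate, so the whole product is a signed sum of products along closed walks, and a product
along a closed walk is a cyclic product.
-/

/-- The products of the entries of `A` along the walks from `a` to `b` in the complete directed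
graph with loops on `I`. The walk of length `0` is allowed, so `walkProd A a a` contains `1`. -/
def walkProd {R I : Type*} [CommMonoid R] (A : Matrix I I R) (a b : I) : Set R :=
  {x | ∃ (n : ℕ) (v : ℕ → I), v 0 = a ∧ v n = b ∧
    x = ∏ k ∈ Finset.range n, A (v k) (v (k + 1))}

section WalkProd

variable {R I : Type*} [CommMonoid R] {A : Matrix I I R}

theorem one_mem_walkProd (a : I) : 1 ∈ walkProd A a a :=
  ⟨0, fun _ => a, rfl, rfl, rfl⟩

theorem apply_mem_walkProd (a b : I) : A a b ∈ walkProd A a b :=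
  ⟨1, fun k => if k = 0 then a else b, by simp⟩

theorem mul_mem_walkProd {a b c : I} {x y : R} (hx : x ∈ walkProd A a b)
    (hy : y ∈ walkProd A b c) : x * y ∈ walkProd A a c := by
  obtain ⟨m, v, rfl, rfl, rfl⟩ := hx
  obtain ⟨n, w, hw, rfl, rfl⟩ := hy
  let u : ℕ → I := fun k => if k ≤ m then v k else w (k - m)
  have u_left {k : ℕ} (hk : k ≤ m) : u k = v k := if_pos hk
  have u_right (k : ℕ) : u (m + k) = w k := by
    rcases k.eq_zero_or_pos with rfl | hk
    · exact (u_left le_rfl).trans hw.symm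
    · simp [u, hk.ne']
  refine ⟨m + n, u, u_left m.zero_le, u_right n, ?_⟩
  rw [Finset.prod_range_add]
  congr 1
  · refine Finset.prod_congr rfl fun k hk => ?_
    have hk : k < m := Finset.mem_range.1 hk
    rw [u_left hk.le, u_left hk]
  · simp only [add_assoc, u_right]

end WalkProd

/-- The `ℤ`-submodule of signed sums of walk products from `a` to `b`. By `mul_mem_walkSpan`
these behave like the hom-sets of an additive category whose objects are the indices. -/
def walkSpan {R I : Type*} [CommRing R] (A : Matrix I I R) (a b : I) : Submodule ℤ R :=
  Submodule.span ℤ (walkProd A a b)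

section WalkSpan

variable {R I : Type*} [CommRing R] {A B : Matrix I I R}

theorem apply_mem_walkSpan (a b : I) : A a b ∈ walkSpan A a b :=
  Submodule.subset_span (apply_mem_walkProd a b)

theorem mul_mem_walkSpan {a b c : I} {x y : R} (hx : x ∈ walkSpan A a b)
    (hy : y ∈ walkSpan A b c) : x * y ∈ walkSpan A a c := by
  have h_mul : walkSpan A a b * walkSpan A b c ≤ walkSpan A a c := by
    rw [walkSpan, walkSpan, Submodule.span_mul_span]
    exact Submodule.span_mono (Set.mul_subset_iff.2 fun _ hx _ hy => mul_mem_walkProd hx hy)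
  exact h_mul (Submodule.mul_mem_mul hx hy)

theorem prod_mem_walkSpan (hB : ∀ i j, B i j ∈ walkSpan A i j) (v : ℕ → I) (n : ℕ) :
    ∏ k ∈ Finset.range n, B (v k) (v (k + 1)) ∈ walkSpan A (v 0) (v n) := by
  induction n with
  | zero => exact Submodule.subset_span (one_mem_walkProd (v 0))
  | succ n ih =>
    rw [Finset.prod_range_succ]
    exact mul_mem_walkSpan ih (hB _ _)

theorem walkProd_self_subset_closure_cycProd (a : I) :
    walkProd A a a ⊆ Subring.closure (cycProd A) := by
  rintro _ ⟨n, v, h_start, h_end, rfl⟩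
  rcases n.eq_zero_or_pos with rfl | hn
  · exact one_mem _
  refine Subring.subset_closure ⟨n, v, hn, Finset.prod_congr rfl fun k hk => ?_⟩
  rcases (Nat.succ_le_of_lt (Finset.mem_range.1 hk)).lt_or_eq with hlt | rfl
  · rw [Nat.mod_eq_of_lt hlt]
  · rw [Nat.mod_self, h_start, h_end]

theorem walkSpan_self_le_closure_cycProd (a : I) :
    walkSpan A a a ≤ (subalgebraOfSubring (Subring.closure (cycProd A))).toSubmodule :=
  Submodule.span_le.2 (walkProd_self_subset_closure_cycProd a)

theorem cycProd_subset_closure_cycProd (hB : ∀ i j, B i j ∈ walkSpan A i j) :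
    cycProd B ⊆ Subring.closure (cycProd A) := by
  rintro _ ⟨s, idx, -, rfl⟩
  have h_closed := prod_mem_walkSpan hB (fun k => idx (k % s)) s
  simp only [Nat.zero_mod, Nat.mod_self] at h_closed
  have h_unwrap : ∏ k ∈ Finset.range s, B (idx k) (idx ((k + 1) % s)) =
      ∏ k ∈ Finset.range s, B (idx (k % s)) (idx ((k + 1) % s)) := by
    refine Finset.prod_congr rfl fun k hk => ?_
    rw [Nat.mod_eq_of_lt (Finset.mem_range.1 hk)]
  rw [h_unwrap]
  exact walkSpan_self_le_closure_cycProd (idx 0) h_closed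

theorem cyclic_difference_product_mem_subring_closure_general (A : Matrix I I R) (o : I) :
    cycProd (Matrix.of fun i j => A i j - A i o * A o j) ⊆ Subring.closure (cycProd A) :=
  cycProd_subset_closure_cycProd fun i j =>
    sub_mem (apply_mem_walkSpan i j)
      (mul_mem_walkSpan (apply_mem_walkSpan i o) (apply_mem_walkSpan o j))

end WalkSpan

/-- The expansion claim in the proof of Lemma 3.3: the cyclic product of the
differences `g_{i_k i_{k+1}} − g_{0 i_k} g_{0 i_{k+1}}` lies in the subring
generated by the cyclic products of `G`. -/
theorem cyclic_difference_product_mem_subring_closure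
    (R : Type*) [CommRing R] (N : ℕ)
    (G : Matrix (Fin (N + 1)) (Fin (N + 1)) R) (hGsym : G.IsSymm)
    (s : ℕ) (hs : 1 ≤ s) (idx : ℕ → Fin N) :
    (∏ k ∈ Finset.range s,
        (G (idx k).succ (idx ((k + 1) % s)).succ -
          G 0 (idx k).succ * G 0 (idx ((k + 1) % s)).succ))
      ∈ Subring.closure (cycProd G) := by
  simpa only [Matrix.of_apply, hGsym.apply 0, SetLike.mem_coe] using
    cyclic_difference_product_mem_subring_closure_general G 0
      ⟨s, fun k => (idx k).succ, hs, rfl⟩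
end

section
/- For every integer m ≥ 2, the real number (1/2)·(sin(π/(2m)))^{-2} is an algebraic integer, i.e. integral over ℤ. -/
/-!
Write `φ = π/(2m)`. Since `2 cos φ` is an algebraic integer, so is every quotient
`sin (k φ) / sin φ`, being an integer polynomial in `2 cos φ`. If `m = 2k`, then `sin² (k φ) = 1/2`,
so `1/(2 sin² φ)` is the square of such a quotient. If `m = 2k + 1`, then `sin² (k · 2φ) = cos² φ`,
so it is twice the square of the quotient `sin (k · 2φ) / sin (2φ)`.
-/

open Real Polynomial

theorem isIntegral_sin_int_mul_div_sin {θ : ℝ} (hθ : IsIntegral ℤ (2 * cos θ)) (n : ℤ) :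
    IsIntegral ℤ (sin (n * θ) / sin θ) := by
  by_cases hsin : sin θ = 0
  · simpa only [hsin, div_zero] using isIntegral_zero
  have hquot : sin (n * θ) / sin θ = aeval (2 * cos θ) (Chebyshev.S ℤ (n - 1)) := by
    rw [div_eq_iff hsin, Chebyshev.aeval_S, Chebyshev.S_two_mul_real_cos]
    push_cast
    rw [sub_add_cancel]
  rw [hquot]
  exact adjoin_le_integralClosure hθ (aeval_mem_adjoin_singleton ℤ _)

section CosMulEqZero

variable {φ : ℝ}

theorem isIntegral_two_mul_cos_of_cos_int_mul_eq_zero {n : ℤ} (h : cos (n * φ) = 0) :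
    IsIntegral ℤ (2 * cos φ) := by
  have hn : (n : ℝ) ≠ 0 := by
    intro hn
    simp [hn] at h
  obtain ⟨j, hj⟩ := cos_eq_zero_iff.mp h
  have hφ : φ = ((2 * j + 1) / (2 * n) : ℚ) * π := by
    push_cast
    field_simp
    linear_combination 2 * hj
  rw [hφ]
  exact isIntegral_two_mul_cos_rat_mul_pi _

theorem isIntegral_half_inv_sin_sq_of_cos_even_mul_eq_zero {k : ℤ}
    (h : cos ((2 * k : ℤ) * φ) = 0) : IsIntegral ℤ (1 / 2 * (sin φ ^ 2)⁻¹) := by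
  have hsin : sin (k * φ) ^ 2 = 1 / 2 := by
    rw [sin_sq_eq_half_sub, ← mul_assoc]
    push_cast at h
    rw [h]
    norm_num
  have hsq : 1 / 2 * (sin φ ^ 2)⁻¹ = (sin (k * φ) / sin φ) ^ 2 := by
    rw [div_pow, hsin, div_eq_mul_inv (1 / 2)]
  rw [hsq]
  exact (isIntegral_sin_int_mul_div_sin (isIntegral_two_mul_cos_of_cos_int_mul_eq_zero h) k).pow 2

theorem isIntegral_half_inv_sin_sq_of_cos_odd_mul_eq_zero {k : ℤ}
    (h : cos ((2 * k + 1 : ℤ) * φ) = 0) (hφ : cos φ ≠ 0) :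
    IsIntegral ℤ (1 / 2 * (sin φ ^ 2)⁻¹) := by
  have hcos : IsIntegral ℤ (2 * cos (2 * φ)) := by
    have hdouble : 2 * cos (2 * φ) = (2 * cos φ) ^ 2 - (2 : ℤ) := by
      rw [cos_two_mul]
      push_cast
      ring
    rw [hdouble]
    exact ((isIntegral_two_mul_cos_of_cos_int_mul_eq_zero h).pow 2).sub
      (isIntegral_algebraMap (R := ℤ))
  set s := sin ((2 * k + 1 : ℤ) * φ) with hs
  have hs_sq : s ^ 2 = 1 := by
    rw [hs, sin_sq, h]
    norm_num
  have hsin : sin (k * (2 * φ)) = s * cos φ := by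
    have hangle : k * (2 * φ) = (2 * k + 1 : ℤ) * φ - φ := by
      push_cast
      ring
    rw [hangle, sin_sub, h, zero_mul, sub_zero]
  have hsq : 1 / 2 * (sin φ ^ 2)⁻¹ = (2 : ℤ) * (sin (k * (2 * φ)) / sin (2 * φ)) ^ 2 := by
    rw [hsin, sin_two_mul, mul_div_mul_right _ _ hφ, div_pow, hs_sq]
    push_cast
    ring
  rw [hsq]
  exact (isIntegral_algebraMap (R := ℤ)).mul ((isIntegral_sin_int_mul_div_sin hcos k).pow 2)

theorem half_inv_sin_sq_isIntegral_general {n : ℤ} (h : cos (n * φ) = 0) (hφ : cos φ ≠ 0) :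
    IsIntegral ℤ (1 / 2 * (sin φ ^ 2)⁻¹) := by
  obtain ⟨k, rfl | rfl⟩ := n.even_or_odd'
  · exact isIntegral_half_inv_sin_sq_of_cos_even_mul_eq_zero h
  · exact isIntegral_half_inv_sin_sq_of_cos_odd_mul_eq_zero h hφ

end CosMulEqZero

/-- Lemma 4.1: `ρₘ/2 = (1/2)·sin⁻²(π/(2m))` is an algebraic integer for `m ≥ 2`. -/
theorem half_inv_sin_sq_isIntegral (m : ℕ) (hm : 2 ≤ m) :
    IsIntegral ℤ ((1 / 2 : ℝ) * ((Real.sin (Real.pi / (2 * m))) ^ 2)⁻¹) := by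
  have hcos_mul : cos ((m : ℤ) * (π / (2 * m))) = 0 :=
    cos_eq_zero_iff.mpr ⟨0, by push_cast; field_simp; ring⟩
  have hcos_pos : 0 < cos (π / (2 * m)) :=
    cos_pos_of_mem_Ioo ⟨by linarith [pi_pos, show 0 ≤ π / (2 * m) by positivity],
      by gcongr; norm_cast; lia⟩
  exact half_inv_sin_sq_isIntegral_general hcos_mul hcos_pos.ne'
end

section
/- For every even integer m ≥ 2, there exists a polynomial q ∈ ℤ[X] with constant coefficient q(0) = 1 such that the image of q in ℝ[X] equals T_m(X/√2) · T_m(−X/√2), where T_m denotes the m-th Chebyshev polynomial of the first kind. -/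
/-!
Write `m = 2n`. Since `T₂ₙ = Tₙ ∘ T₂`, the value `T₂ₙ(p) = Tₙ(2p² - 1)` depends only on `p²`.
At `p = ±X/√2` it is `Tₙ(X² - 1)`, so the product is the square of an integer polynomial whose
constant term is `Tₙ(-1) = ±1`.
-/

open Polynomial

theorem two_mul_C_mul_X_sq {R : Type*} [Semiring R] {r : R} (hr : 2 * r ^ 2 = 1) :
    2 * (C r * X) ^ 2 = (X ^ 2 : R[X]) := by
  calc 2 * (C r * X) ^ 2
    _ = C (2 * r ^ 2) * X ^ 2 := by
      rw [(commute_X (C r)).symm.mul_pow, ← mul_assoc, C_mul, C_pow, C_ofNat]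
    _ = X ^ 2 := by rw [hr, C_1, one_mul]

section CommRing

variable {R : Type*} [CommRing R]

theorem chebyshevT_two_mul_comp (n : ℤ) (p : R[X]) :
    (Chebyshev.T R (2 * n)).comp p = (Chebyshev.T R n).comp (2 * p ^ 2 - 1) := by
  rw [mul_comm, Chebyshev.T_mul, comp_assoc, Chebyshev.T_two]
  simp

theorem chebyshevT_two_mul_comp_mul_comp_neg (n : ℤ) (p : R[X]) :
    (Chebyshev.T R (2 * n)).comp p * (Chebyshev.T R (2 * n)).comp (-p) =
      (Chebyshev.T R n).comp (2 * p ^ 2 - 1) ^ 2 := by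
  rw [chebyshevT_two_mul_comp, chebyshevT_two_mul_comp, neg_sq, ← sq]

theorem chebyshevT_eval_neg_one_sq (n : ℤ) : (Chebyshev.T R n).eval (-1) ^ 2 = 1 := by
  rw [Chebyshev.T_eval_neg_one]
  exact_mod_cast congrArg (fun u : ℤˣ ↦ ((u : ℤ) : R)) (Int.units_sq n.negOnePow)

theorem coeff_zero_chebyshevT_comp_X_sq_sub_one_sq (n : ℤ) :
    ((Chebyshev.T R n).comp (X ^ 2 - 1) ^ 2).coeff 0 = 1 := by
  calc ((Chebyshev.T R n).comp (X ^ 2 - 1) ^ 2).coeff 0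
    _ = (Chebyshev.T R n).eval (-1) ^ 2 := by simp [coeff_zero_eq_eval_zero, eval_comp]
    _ = 1 := chebyshevT_eval_neg_one_sq n

theorem chebyshevT_product_int_poly_general {r : R} (hr : 2 * r ^ 2 = 1) {m : ℤ} (hm : Even m) :
    ∃ q : ℤ[X], q.coeff 0 = 1 ∧
      q.map (Int.castRingHom R) =
        (Chebyshev.T R m).comp (C r * X) * (Chebyshev.T R m).comp (-(C r * X)) := by
  obtain ⟨n, rfl⟩ := hm.two_dvd
  refine ⟨(Chebyshev.T ℤ n).comp (X ^ 2 - 1) ^ 2,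
    coeff_zero_chebyshevT_comp_X_sq_sub_one_sq n, ?_⟩
  rw [chebyshevT_two_mul_comp_mul_comp_neg, two_mul_C_mul_X_sq hr]
  simp [Polynomial.map_comp]

end CommRing

/-- Even case of the construction of `pₘ` in Lemma 4.1: for even `m ≥ 2`,
`Tₘ(X/√2) · Tₘ(−X/√2)` is an integer polynomial with constant term `1`. -/
theorem chebyshevT_product_int_poly (m : ℕ) (hm : 2 ≤ m) (hme : Even m) :
    ∃ q : Polynomial ℤ, q.coeff 0 = 1 ∧
      q.map (Int.castRingHom ℝ) =
        (Polynomial.Chebyshev.T ℝ m).comp (Polynomial.C (Real.sqrt 2)⁻¹ * Polynomial.X) *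
        (Polynomial.Chebyshev.T ℝ m).comp (-(Polynomial.C (Real.sqrt 2)⁻¹ * Polynomial.X)) :=
  chebyshevT_product_int_poly_general (by norm_num) (by exact_mod_cast hme)
end

section
/- For every odd integer m ≥ 1, there exists a polynomial q ∈ ℤ[X] with constant coefficient q(0) = 1 such that the image of q in ℝ[X] equals U_m(X/√2) · U_m(−X/√2) + 1, where U_m denotes the m-th Chebyshev polynomial of the second kind. -/
open Polynomial

/-!
For odd `m = 2k + 1`, dividing `sin ((2k + 2)θ)` by `sin θ` through `sin 2θ` gives
`Uₘ(x) = 2x · Uₖ(2x² - 1)`. At `x = ±X/√2` the inner argument is `X² - 1` for both signs, so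
`Uₘ(X/√2) · Uₘ(-X/√2) = -2X² · Uₖ(X² - 1)²`, which has integer coefficients and no constant term.
-/

section Chebyshev

variable (R : Type*) [CommRing R]

theorem two_mul_chebyshevT_mul_chebyshevU (m n : ℤ) :
    2 * Chebyshev.T R m * Chebyshev.U R n = Chebyshev.U R (n + m) + Chebyshev.U R (n - m) := by
  induction m using Chebyshev.induct with
  | zero => simp [two_mul]
  | one =>
    rw [Chebyshev.T_one, Chebyshev.U_add_one]
    ring
  | add_two k ih1 ih0 =>
    have hadd := Chebyshev.U_add_two R (n + k)
    have hsub := Chebyshev.U_sub_two R (n - k)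
    have hT := Chebyshev.T_add_two R k
    linear_combination (norm := ring_nf)
      2 * Chebyshev.U R n * hT - hadd - hsub + 2 * (X : R[X]) * ih1 - ih0
  | neg_add_one k ih0 ih1 =>
    have hadd := Chebyshev.U_sub_one R (n - k)
    have hsub := Chebyshev.U_add_one R (n + k)
    have hT := Chebyshev.T_sub_one R (-k)
    linear_combination (norm := ring_nf)
      2 * Chebyshev.U R n * hT - hadd - hsub + 2 * (X : R[X]) * ih0 - ih1

theorem chebyshevU_mul_add_one_sub_one (m n : ℤ) :
    Chebyshev.U R (m * (n + 1) - 1) =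
      Chebyshev.U R (m - 1) * (Chebyshev.U R n).comp (Chebyshev.T R m) := by
  induction n using Chebyshev.induct with
  | zero => simp
  | one =>
    have hTU := two_mul_chebyshevT_mul_chebyshevU R m (m - 1)
    rw [sub_sub_cancel_left, Chebyshev.U_neg_one] at hTU
    rw [Chebyshev.U_one, mul_comp, ofNat_comp, X_comp]
    linear_combination (norm := ring_nf) -hTU
  | add_two k ih1 ih0 =>
    have hTU := two_mul_chebyshevT_mul_chebyshevU R m (m * (k + 2) - 1)
    have hcomp := congr_arg (comp · (Chebyshev.T R m)) (Chebyshev.U_add_two R k)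
    simp only [sub_comp, mul_comp, ofNat_comp, X_comp] at hcomp
    linear_combination (norm := ring_nf)
      -hTU - Chebyshev.U R (m - 1) * hcomp + 2 * Chebyshev.T R m * ih1 - ih0
  | neg_add_one k ih0 ih1 =>
    have hTU := two_mul_chebyshevT_mul_chebyshevU R m (m * (-k + 1) - 1)
    have hcomp := congr_arg (comp · (Chebyshev.T R m)) (Chebyshev.U_sub_one R (-k))
    simp only [sub_comp, mul_comp, ofNat_comp, X_comp] at hcomp
    linear_combination (norm := ring_nf)
      -hTU - Chebyshev.U R (m - 1) * hcomp + 2 * Chebyshev.T R m * ih0 - ih1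

variable {R}

theorem chebyshevU_two_mul_add_one_comp (k : ℤ) (p : R[X]) :
    (Chebyshev.U R (2 * k + 1)).comp p = 2 * p * (Chebyshev.U R k).comp (2 * p ^ 2 - 1) := by
  have hU : Chebyshev.U R (2 * k + 1) = 2 * X * (Chebyshev.U R k).comp (2 * X ^ 2 - 1) := by
    have h := chebyshevU_mul_add_one_sub_one R 2 k
    rwa [show 2 * (k + 1) - 1 = 2 * k + 1 by ring, show (2 : ℤ) - 1 = 1 by norm_num,
      Chebyshev.U_one, Chebyshev.T_two] at h
  simp [hU, comp_assoc]

theorem chebyshevU_two_mul_add_one_comp_mul_comp_neg (k : ℤ) (p : R[X]) :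
    (Chebyshev.U R (2 * k + 1)).comp p * (Chebyshev.U R (2 * k + 1)).comp (-p) =
      -(2 * (2 * p ^ 2) * (Chebyshev.U R k).comp (2 * p ^ 2 - 1) ^ 2) := by
  rw [chebyshevU_two_mul_add_one_comp, chebyshevU_two_mul_add_one_comp, neg_sq]
  ring

theorem chebyshevU_product_int_poly_general {c : R} (hc : 2 * c ^ 2 = 1) {m : ℤ} (hm : Odd m) :
    ∃ q : ℤ[X], q.coeff 0 = 1 ∧
      q.map (Int.castRingHom R) =
        (Chebyshev.U R m).comp (C c * X) * (Chebyshev.U R m).comp (-(C c * X)) + 1 := by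
  obtain ⟨k, rfl⟩ := hm
  have hp : 2 * (C c * X) ^ 2 = (X ^ 2 : R[X]) := by
    rw [mul_pow, ← mul_assoc, ← C_pow, ← C_ofNat, ← C_mul, hc, C_1, one_mul]
  refine ⟨1 - 2 * X ^ 2 * (Chebyshev.U ℤ k).comp (X ^ 2 - 1) ^ 2, by simp [mul_assoc], ?_⟩
  rw [chebyshevU_two_mul_add_one_comp_mul_comp_neg, hp, neg_add_eq_sub]
  simp [Polynomial.map_comp]

end Chebyshev

/-- Odd case of the construction of `pₘ` in Lemma 4.1: for odd `m ≥ 1`,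
`Uₘ(X/√2) · Uₘ(−X/√2) + 1` is an integer polynomial with constant term `1`. -/
theorem chebyshevU_product_int_poly (m : ℕ) (hm : 1 ≤ m) (hmo : Odd m) :
    ∃ q : Polynomial ℤ, q.coeff 0 = 1 ∧
      q.map (Int.castRingHom ℝ) =
        (Polynomial.Chebyshev.U ℝ m).comp (Polynomial.C (Real.sqrt 2)⁻¹ * Polynomial.X) *
        (Polynomial.Chebyshev.U ℝ m).comp (-(Polynomial.C (Real.sqrt 2)⁻¹ * Polynomial.X)) + 1 :=
  chebyshevU_product_int_poly_general (by norm_num [inv_pow]) (mod_cast hmo)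
end

section
/- For every odd integer m ≥ 3, U_m(sin(π/(2m))) · U_m(−sin(π/(2m))) = −1, where U_m denotes the m-th Chebyshev polynomial of the second kind. -/
/-!
Since `± sin θ = cos (π/2 ∓ θ)`, multiplying the product `Uₙ(sin θ) · Uₙ(-sin θ)` by `cos² θ` gives
`sin ((n+1)(π/2 - θ)) · sin ((n+1)(π/2 + θ)) = sin² ((n+1)π/2) - sin² ((n+1)θ)`.
For odd `n` the first square vanishes, and when `cos (nθ) = 0` the second one is `cos² θ`.
-/

open Real Polynomial

theorem sin_sub_mul_sin_add (x y : ℝ) : sin (x - y) * sin (x + y) = sin x ^ 2 - sin y ^ 2 := by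
  rw [sin_sub, sin_add]
  linear_combination sin x ^ 2 * sin_sq_add_cos_sq y - sin y ^ 2 * sin_sq_add_cos_sq x

theorem chebyshevU_eval_sin_mul_cos (n : ℤ) (θ : ℝ) :
    (Chebyshev.U ℝ n).eval (sin θ) * cos θ = sin ((n + 1) * (π / 2 - θ)) := by
  simpa only [cos_pi_div_two_sub, sin_pi_div_two_sub] using Chebyshev.U_real_cos (π / 2 - θ) n

theorem chebyshevU_eval_sin_mul_eval_neg_sin_mul_cos_sq (n : ℤ) (θ : ℝ) :
    (Chebyshev.U ℝ n).eval (sin θ) * (Chebyshev.U ℝ n).eval (-sin θ) * cos θ ^ 2 =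
      sin ((n + 1) * (π / 2)) ^ 2 - sin ((n + 1) * θ) ^ 2 := by
  have eval_neg_sin :
      (Chebyshev.U ℝ n).eval (-sin θ) * cos θ = sin ((n + 1) * (π / 2 + θ)) := by
    simpa only [sin_neg, cos_neg, sub_neg_eq_add] using chebyshevU_eval_sin_mul_cos n (-θ)
  calc
    _ = ((Chebyshev.U ℝ n).eval (sin θ) * cos θ) * ((Chebyshev.U ℝ n).eval (-sin θ) * cos θ) := by
      ring
    _ = sin ((n + 1) * (π / 2 - θ)) * sin ((n + 1) * (π / 2 + θ)) := by
      rw [chebyshevU_eval_sin_mul_cos, eval_neg_sin]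
    _ = _ := by rw [mul_sub, mul_add, sin_sub_mul_sin_add]

theorem sin_add_sq_of_cos_eq_zero {x : ℝ} (hx : cos x = 0) (y : ℝ) :
    sin (x + y) ^ 2 = cos y ^ 2 := by
  rw [sin_add, hx, zero_mul, add_zero, mul_pow, sin_sq, hx]
  ring

theorem sin_add_one_mul_pi_div_two_of_odd {n : ℤ} (hn : Odd n) :
    sin ((n + 1) * (π / 2)) = 0 := by
  obtain ⟨k, rfl⟩ := hn
  rw [← sin_int_mul_pi (k + 1)]
  push_cast
  ring_nf

theorem cos_pi_div_two_mul_pos {x : ℝ} (hx : 1 < x) : 0 < cos (π / (2 * x)) := by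
  have angle_lt : π / (2 * x) < π / 2 :=
    div_lt_div_of_pos_left pi_pos two_pos (by linarith)
  exact cos_pos_of_mem_Ioo ⟨(neg_lt_zero.2 pi_div_two_pos).trans (by positivity), angle_lt⟩

theorem chebyshevU_eval_sin_product_general {n : ℤ} (hn : Odd n) {θ : ℝ} (hθ : cos θ ≠ 0)
    (hnθ : cos (n * θ) = 0) :
    (Chebyshev.U ℝ n).eval (sin θ) * (Chebyshev.U ℝ n).eval (-sin θ) = -1 := by
  apply mul_right_cancel₀ (pow_ne_zero 2 hθ)
  calc
    _ = sin ((n + 1) * (π / 2)) ^ 2 - sin ((n + 1) * θ) ^ 2 :=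
      chebyshevU_eval_sin_mul_eval_neg_sin_mul_cos_sq n θ
    _ = 0 ^ 2 - cos θ ^ 2 := by
      rw [sin_add_one_mul_pi_div_two_of_odd hn, add_one_mul, sin_add_sq_of_cos_eq_zero hnθ]
    _ = -1 * cos θ ^ 2 := by ring

/-- Odd case in the proof of Lemma 4.1: `Uₘ(sin(π/(2m))) · Uₘ(−sin(π/(2m))) = −1`
for odd `m ≥ 3`. -/
theorem chebyshevU_eval_sin_product (m : ℕ) (hm : 3 ≤ m) (hmo : Odd m) :
    (Polynomial.Chebyshev.U ℝ m).eval (Real.sin (Real.pi / (2 * m))) *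
      (Polynomial.Chebyshev.U ℝ m).eval (-Real.sin (Real.pi / (2 * m))) = -1 := by
  have angle_mul : (m : ℝ) * (π / (2 * m)) = π / 2 := by field_simp
  exact chebyshevU_eval_sin_product_general (mod_cast hmo)
    (cos_pi_div_two_mul_pos (by norm_cast; lia)).ne' (by simp [angle_mul])
end

section
/- Let F ⊆ ℝ be a subfield which is a number field (finite-dimensional over ℚ) and totally real, i.e. every field embedding F → ℂ has image contained in ℝ. Let x ∈ F with x ≥ 0, and suppose that σ(x) ≥ 0 for every field embedding σ : F → ℝ. Then the subfield F(√x) of ℝ obtained by adjoining the real square root √x to F is a totally real number field. -/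
/-!
Let `φ` be a complex embedding of `F(S)`, where every `s ∈ S` squares to an element `x ∈ F` that is
nonnegative under all real embeddings of `F`. As `F` is totally real, `φ` restricts to a real
embedding of `F`, so `φ(s)² = φ(x)` is a nonnegative real and `φ(s)` is real. Thus `φ` and its
complex conjugate agree on `F` and on `S`, hence on `F(S)`.
-/

open NumberField NumberField.ComplexEmbedding
open IntermediateField (adjoin subset_adjoin)

theorem isTotallyReal_iff_forall_im_eq_zero {K : Type*} [Field K] :
    IsTotallyReal K ↔ ∀ (φ : K →+* ℂ) (y : K), (φ y).im = 0 := by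
  refine ⟨fun _ φ y ↦ ?_, fun h ↦ ⟨fun v ↦ ?_⟩⟩
  · exact Complex.conj_eq_iff_im.1 (RingHom.congr_fun (IsTotallyReal.complexEmbedding_isReal φ) y)
  · exact InfinitePlace.isReal_iff.2 (RingHom.ext fun y ↦ Complex.conj_eq_iff_im.2 (h _ y))

section Extension

variable {K L : Type*} [Field K] [Field L] [Algebra K L]

open scoped ComplexOrder in
theorem im_eq_zero_of_sq_eq_algebraMap {φ : L →+* ℂ} (hφ : IsReal (φ.comp (algebraMap K L)))
    {s : L} {x : K} (hs : s ^ 2 = algebraMap K L x) (hx : 0 ≤ hφ.embedding x) :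
    (φ s).im = 0 := by
  rw [← Complex.sq_nonneg_iff]
  calc (0 : ℂ) ≤ (hφ.embedding x : ℂ) := Complex.zero_le_real.2 hx
    _ = φ (algebraMap K L x) := hφ.coe_embedding_apply x
    _ = φ s ^ 2 := by rw [← hs, map_pow]

theorem isReal_of_isReal_comp_algebraMap_of_adjoin {S : Set L} {φ : adjoin K S →+* ℂ}
    (hK : IsReal (φ.comp (algebraMap K (adjoin K S))))
    (hS : ∀ s (hs : s ∈ S), (φ ⟨s, subset_adjoin K S hs⟩).im = 0) :
    IsReal φ := by
  let _ : Algebra K ℂ := (φ.comp (algebraMap K (adjoin K S))).toAlgebra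
  let φ₁ : adjoin K S →ₐ[K] ℂ := { φ with commutes' := fun _ ↦ rfl }
  let φ₂ : adjoin K S →ₐ[K] ℂ := { conjugate φ with commutes' := RingHom.congr_fun hK }
  have conj_eq : φ₂ = φ₁ :=
    IntermediateField.adjoin_algHom_ext K fun s hs ↦ Complex.conj_eq_iff_im.2 (hS s hs)
  exact isReal_iff.2 (congrArg AlgHom.toRingHom conj_eq)

theorem isTotallyReal_adjoin_of_sq_eq_algebraMap [IsTotallyReal K] {S : Set L}
    (hS : ∀ s ∈ S, ∃ x : K, s ^ 2 = algebraMap K L x ∧ ∀ σ : K →+* ℝ, 0 ≤ σ x) :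
    IsTotallyReal (adjoin K S) := by
  refine ⟨fun v ↦ InfinitePlace.isReal_iff.2 ?_⟩
  have hK := IsTotallyReal.complexEmbedding_isReal (v.embedding.comp (algebraMap K (adjoin K S)))
  refine isReal_of_isReal_comp_algebraMap_of_adjoin hK fun s hs ↦ ?_
  obtain ⟨x, hsx, hx⟩ := hS s hs
  exact im_eq_zero_of_sq_eq_algebraMap hK (Subtype.ext hsx) (hx _)

end Extension

section ClosureUnion

variable {L : Type*} [Field L] (F : Subfield L)

theorem toSubfield_adjoin_eq_closure_union (S : Set L) :
    (adjoin F S).toSubfield = Subfield.closure ((F : Set L) ∪ S) := by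
  rw [IntermediateField.adjoin_toSubfield]
  exact congrArg (fun T ↦ Subfield.closure (T ∪ S)) Subtype.range_coe

theorem finiteDimensional_closure_union [CharZero L] [FiniteDimensional ℚ F] {S : Set L} [Finite S]
    (hS : ∀ s ∈ S, IsIntegral F s) :
    FiniteDimensional ℚ (Subfield.closure ((F : Set L) ∪ S)) := by
  have : FiniteDimensional F (adjoin F S) := IntermediateField.finiteDimensional_adjoin hS
  rw [← toSubfield_adjoin_eq_closure_union]
  exact FiniteDimensional.trans ℚ F (adjoin F S)

theorem adjoin_sqrt_totally_real_general [CharZero L]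
    (htr : ∀ (σ : F →+* ℂ) (y : F), (σ y).im = 0) {S : Set L}
    (hS : ∀ s ∈ S, ∃ x : F, s ^ 2 = x ∧ ∀ σ : F →+* ℝ, 0 ≤ σ x) :
    (FiniteDimensional ℚ F → S.Finite →
      FiniteDimensional ℚ (Subfield.closure ((F : Set L) ∪ S))) ∧
    ∀ (σ : Subfield.closure ((F : Set L) ∪ S) →+* ℂ)
      (y : Subfield.closure ((F : Set L) ∪ S)), (σ y).im = 0 := by
  constructor
  · intro _ hfin
    have := hfin.to_subtype
    refine finiteDimensional_closure_union F fun s hs ↦ ?_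
    obtain ⟨x, hsx, -⟩ := hS s hs
    exact .of_pow two_pos (hsx ▸ isIntegral_algebraMap (x := x))
  · have : IsTotallyReal F := isTotallyReal_iff_forall_im_eq_zero.2 htr
    rw [← isTotallyReal_iff_forall_im_eq_zero, ← toSubfield_adjoin_eq_closure_union]
    exact isTotallyReal_adjoin_of_sq_eq_algebraMap hS

end ClosureUnion

/-- Verification of Vinberg's condition (V1) in Proposition 3.4: if `F ⊆ ℝ` is a
totally real number field, `x ∈ F` is nonnegative and all its real embeddings take
nonnegative values at `x`, then `F(√x) ⊆ ℝ` is again a totally real number field. -/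
theorem adjoin_sqrt_totally_real
    (F : Subfield ℝ) (hfin : FiniteDimensional ℚ F)
    (htr : ∀ (σ : F →+* ℂ) (y : F), (σ y).im = 0)
    (x : F) (hx : (0 : ℝ) ≤ (x : ℝ))
    (hxσ : ∀ σ : F →+* ℝ, 0 ≤ σ x) :
    FiniteDimensional ℚ (Subfield.closure ((F : Set ℝ) ∪ {Real.sqrt (x : ℝ)})) ∧
    ∀ (σ : (Subfield.closure ((F : Set ℝ) ∪ {Real.sqrt (x : ℝ)})) →+* ℂ)
      (y : (Subfield.closure ((F : Set ℝ) ∪ {Real.sqrt (x : ℝ)}))), (σ y).im = 0 := by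
  have hS : ∀ s ∈ ({√(x : ℝ)} : Set ℝ), ∃ z : F, s ^ 2 = z ∧ ∀ σ : F →+* ℝ, 0 ≤ σ z := by
    rintro _ rfl
    exact ⟨x, Real.sq_sqrt hx, hxσ⟩
  exact (adjoin_sqrt_totally_real_general F htr hS).imp_left fun h ↦ h hfin (Set.finite_singleton _)
end

section
/- Let G be the symmetric 4×4 real matrix with diagonal entries 1 and off-diagonal entries g_{12} = g_{21} = −√2/2, g_{13} = g_{31} = −(2/3)√3, g_{24} = g_{42} = −√10/2, and g_{14} = g_{41} = g_{23} = g_{32} = g_{34} = g_{43} = 0. Then the matrix 2G has a cyclic product that is not an algebraic integer; in particular, the cyclic product (2g_{13})(2g_{31}) = 16/3 is not integral over ℤ. -/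
/-- The Gram matrix `G(P'₂)` of the properly quasi-arithmetic `2`-dimensional face
from Section 6 of the paper. -/
noncomputable def GP2 : Matrix (Fin 4) (Fin 4) ℝ :=
  !![1, -(Real.sqrt 2 / 2), -(2 / 3) * Real.sqrt 3, 0;
     -(Real.sqrt 2 / 2), 1, 0, -(Real.sqrt 10 / 2);
     -(2 / 3) * Real.sqrt 3, 0, 1, 0;
     0, -(Real.sqrt 10 / 2), 0, 1]

theorem mul_mem_cycProd {R : Type*} [CommRing R] {I : Type*} (A : Matrix I I R) (i j : I) :
    A i j * A j i ∈ cycProd A :=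
  ⟨2, fun k => if k = 0 then i else j, one_le_two, by simp [Finset.prod_range_succ]⟩

section Integrality

open Polynomial

theorem C_dvd_C_iff {R : Type*} [CommSemiring R] {a b : R} : C a ∣ C b ↔ a ∣ b :=
  ⟨fun h => by simpa using map_dvd constantCoeff h, map_dvd C⟩

-- Since `b X - a` has least degree among the polynomials vanishing at `x`, integrality of `x`
-- means that it is a multiple of its leading coefficient.
theorem isIntegral_iff_dvd_of_smul_eq_algebraMap {R S : Type*} [CommRing R] [IsDomain R]
    [IsIntegrallyClosed R] [CommRing S] [IsDomain S] [Algebra R S] [Module.IsTorsionFree R S]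
    {a b : R} {x : S} (hb : b ≠ 0) (hx : b • x = algebraMap R S a) :
    IsIntegral R x ↔ b ∣ a := by
  have hroot : aeval x (C b * X + C (-a)) = 0 := by
    simp [← Algebra.smul_def, hx]
  have hdegree : (C b * X + C (-a)).degree = 1 := degree_linear hb
  have hne : C b * X + C (-a) ≠ 0 := ne_zero_of_degree_gt (hdegree ▸ zero_lt_one)
  have hmin (q : R[X]) (hq : q.Monic) (hqx : aeval x q = 0) :
      (C b * X + C (-a)).degree ≤ q.degree := by
    have hq_pos : 0 < q.degree := degree_pos_of_aeval_root hq.ne_zero hqx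
      ((injective_iff_map_eq_zero _).mp (FaithfulSMul.algebraMap_injective R S))
    rw [hdegree]
    exact Nat.WithBot.one_le_iff_zero_lt.mpr hq_pos
  rw [minpoly.IsIntegrallyClosed.isIntegral_iff_leadingCoeff_dvd hroot hne hmin,
    leadingCoeff_linear hb, dvd_add_right (dvd_mul_right _ _), C_dvd_C_iff, dvd_neg]

end Integrality

theorem GP2_zero_two_mul_GP2_two_zero : GP2 0 2 * GP2 2 0 = 4 / 3 :=
  calc GP2 0 2 * GP2 2 0
      = (-(2 / 3) * √3) * (-(2 / 3) * √3) := by simp [GP2]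
    _ = 4 / 9 * √3 ^ 2 := by ring
    _ = 4 / 3 := by rw [Real.sq_sqrt zero_le_three]; norm_num

/-- Vinberg's condition (V3) fails for `G(P'₂)`: the matrix `2·G(P'₂)` has a cyclic
product, namely `(2g₁₃)(2g₃₁) = 16/3`, which is not an algebraic integer. -/
theorem GP2_cycProd_not_integral :
    (∃ x ∈ cycProd ((2 : ℝ) • GP2), ¬ IsIntegral ℤ x) ∧
    (2 * GP2 0 2) * (2 * GP2 2 0) = 16 / 3 ∧
    ((16 : ℝ) / 3) ∈ cycProd ((2 : ℝ) • GP2) ∧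
    ¬ IsIntegral ℤ ((16 : ℝ) / 3) := by
  have hprod : (2 * GP2 0 2) * (2 * GP2 2 0) = 16 / 3 := by
    rw [mul_mul_mul_comm, GP2_zero_two_mul_GP2_two_zero]
    norm_num
  have hmem : (16 : ℝ) / 3 ∈ cycProd ((2 : ℝ) • GP2) := by
    simpa only [Matrix.smul_apply, smul_eq_mul, hprod] using mul_mem_cycProd ((2 : ℝ) • GP2) 0 2
  have hnot : ¬ IsIntegral ℤ ((16 : ℝ) / 3) := by
    have hsmul : (3 : ℤ) • ((16 : ℝ) / 3) = algebraMap ℤ ℝ 16 := by norm_num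
    rw [isIntegral_iff_dvd_of_smul_eq_algebraMap three_ne_zero hsmul]
    decide
  exact ⟨⟨16 / 3, hmem, hnot⟩, hprod, hmem, hnot⟩
end
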